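/- Let L be a completely distributive commutative subspace lattice on H, let Φ be a rank preserving linear map on Alg L such that every element of F is consistent with respect to Φ, and let N ∈ F. Then there exist a linear map U defined on the (algebraic) linear span of ⋃{M : M ∈ 𝔊_N} — a dense subspace of ⋁{M : M ∈ 𝔊_N} — and a linear map V defined on the (algebraic) linear span of ⋃{M₋^⊥ : M ∈ 𝔊_N} — a dense subspace of ⋁{M₋^⊥ : M ∈ 𝔊_N} — such that Φ(x⊗f*) = (Ux)⊗(Vf)* whenever there is M ∈ 𝔊_N with x ∈ M and f ∈ M₋^⊥. -/

import Mathlib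

open scoped InnerProductSpace

noncomputable section

/-- The join (closed linear span) of a family of subspaces of a Hilbert space. -/
def closedJoin {H : Type*} [NormedAddCommGroup H] [InnerProductSpace ℂ H]
    (S : Set (Submodule ℂ H)) : Submodule ℂ H :=
  (sSup S).topologicalClosure

/-- A subspace lattice on `H`: a family of closed subspaces containing `{0}` and `H`,
closed under arbitrary intersections and arbitrary closed linear spans. -/
structure IsSubspaceLattice {H : Type*} [NormedAddCommGroup H] [InnerProductSpace ℂ H]
    (L : Set (Submodule ℂ H)) : Prop where
  isClosed : ∀ E ∈ L, IsClosed (E : Set H)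
  bot_mem : ⊥ ∈ L
  top_mem : ⊤ ∈ L
  sInf_mem : ∀ S : Set (Submodule ℂ H), S ⊆ L → sInf S ∈ L
  join_mem : ∀ S : Set (Submodule ℂ H), S ⊆ L → closedJoin S ∈ L

/-- `M₋`: the join of all members of `L` that do not contain `M`. -/
def minus {H : Type*} [NormedAddCommGroup H] [InnerProductSpace ℂ H]
    (L : Set (Submodule ℂ H)) (M : Submodule ℂ H) : Submodule ℂ H :=
  closedJoin {E | E ∈ L ∧ ¬ M ≤ E}

open Classical in
/-- The orthogonal projection of `H` onto a closed subspace `E`, as an operator on `H`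
(junk value `0` if `E` is not closed). -/
def projOf {H : Type*} [NormedAddCommGroup H] [InnerProductSpace ℂ H] [CompleteSpace H]
    (E : Submodule ℂ H) : H →L[ℂ] H :=
  if h : IsClosed (E : Set H) then
    haveI : CompleteSpace E := h.completeSpace_coe
    E.subtypeL.comp (Submodule.orthogonalProjectionOnto E)
  else 0

/-- A commutative subspace lattice: the orthogonal projections onto members commute. -/
structure IsCSL {H : Type*} [NormedAddCommGroup H] [InnerProductSpace ℂ H] [CompleteSpace H]
    (L : Set (Submodule ℂ H)) extends IsSubspaceLattice L : Prop where
  commutes : ∀ E ∈ L, ∀ F ∈ L, projOf E * projOf F = projOf F * projOf E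

/-- Complete distributivity of the lattice `L` (meets are intersections, joins are
closed linear spans). -/
def IsCompletelyDistributive {H : Type*} [NormedAddCommGroup H] [InnerProductSpace ℂ H]
    (L : Set (Submodule ℂ H)) : Prop :=
  ∀ (I : Type) (J : I → Type) (E : (i : I) → J i → Submodule ℂ H),
    (∀ i j, E i j ∈ L) →
     ((⨅ i, closedJoin (Set.range (E i)))
        = closedJoin (Set.range fun φ : (∀ i, J i) => ⨅ i, E i (φ i)))
    ∧ (closedJoin (Set.range fun i => ⨅ j, E i j)
        = ⨅ φ : (∀ i, J i), closedJoin (Set.range fun i => E i (φ i)))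

/-- `Alg L`: all bounded operators leaving every member of `L` invariant. -/
def algL {H : Type*} [NormedAddCommGroup H] [InnerProductSpace ℂ H]
    (L : Set (Submodule ℂ H)) : Set (H →L[ℂ] H) :=
  {T | ∀ E ∈ L, ∀ x ∈ E, T x ∈ E}

/-- The rank one operator `x ⊗ f* : h ↦ ⟨h, f⟩ x`. -/
def rankOne {H : Type*} [NormedAddCommGroup H] [InnerProductSpace ℂ H]
    (x f : H) : H →L[ℂ] H :=
  (innerSL ℂ f).smulRight x

/-- The rank of a bounded operator: the dimension of its range. -/
def opRank {H : Type*} [NormedAddCommGroup H] [InnerProductSpace ℂ H]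
    (T : H →L[ℂ] H) : Cardinal :=
  Module.rank ℂ (LinearMap.range (T : H →ₗ[ℂ] H))

/-- `Φ` is a linear map of `Alg L` into itself. -/
structure IsLinearOnAlg {H : Type*} [NormedAddCommGroup H] [InnerProductSpace ℂ H]
    (L : Set (Submodule ℂ H)) (Φ : (H →L[ℂ] H) → (H →L[ℂ] H)) : Prop where
  maps : ∀ A ∈ algL L, Φ A ∈ algL L
  map_add : ∀ A ∈ algL L, ∀ B ∈ algL L, Φ (A + B) = Φ A + Φ B
  map_smul : ∀ (c : ℂ), ∀ A ∈ algL L, Φ (c • A) = c • Φ A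

/-- `Φ` preserves the rank of every finite rank operator in `Alg L`. -/
def RankPreserving {H : Type*} [NormedAddCommGroup H] [InnerProductSpace ℂ H]
    (L : Set (Submodule ℂ H)) (Φ : (H →L[ℂ] H) → (H →L[ℂ] H)) : Prop :=
  ∀ A ∈ algL L, opRank A < Cardinal.aleph0 → opRank (Φ A) = opRank A

/-- `a ∼ b`: (nonzero) vectors `a` and `b` are linearly dependent. -/
def Dep {H : Type*} [NormedAddCommGroup H] [InnerProductSpace ℂ H] (a b : H) : Prop :=
  ∃ c : ℂ, c ≠ 0 ∧ b = c • a

/-- `N` is consistent with respect to `Φ`. -/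
def Consistent {H : Type*} [NormedAddCommGroup H] [InnerProductSpace ℂ H]
    (L : Set (Submodule ℂ H)) (Φ : (H →L[ℂ] H) → (H →L[ℂ] H))
    (N : Submodule ℂ H) : Prop :=
  N ≠ ⊥ ∧ minus L N ≠ ⊤ ∧
    ∃ (U : N →ₗ[ℂ] H) (V : ((minus L N)ᗮ : Submodule ℂ H) →ₗ[ℂ] H),
      ∀ (x : N) (f : ((minus L N)ᗮ : Submodule ℂ H)),
        Φ (rankOne (x : H) (f : H)) = rankOne (U x) (V f)

/-- `N` is twisted with respect to `Φ`. -/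
def Twisted {H : Type*} [NormedAddCommGroup H] [InnerProductSpace ℂ H]
    (L : Set (Submodule ℂ H)) (Φ : (H →L[ℂ] H) → (H →L[ℂ] H))
    (N : Submodule ℂ H) : Prop :=
  N ≠ ⊥ ∧ minus L N ≠ ⊤ ∧
    ∃ (U : ((minus L N)ᗮ : Submodule ℂ H) →ₗ⋆[ℂ] H) (V : N →ₗ⋆[ℂ] H),
      ∀ (x : N) (f : ((minus L N)ᗮ : Submodule ℂ H)),
        Φ (rankOne (x : H) (f : H)) = rankOne (U f) (V x)

/-- `N` is isolated: `dim N = 1` and `N^⊥ ∈ L`. -/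
def Isolated {H : Type*} [NormedAddCommGroup H] [InnerProductSpace ℂ H]
    (L : Set (Submodule ℂ H)) (N : Submodule ℂ H) : Prop :=
  Module.rank ℂ N = 1 ∧ Nᗮ ∈ L

/-- The family `F` of all `N ∈ L` with `N ≠ {0}` and `N₋ ≠ H`. -/
def famF {H : Type*} [NormedAddCommGroup H] [InnerProductSpace ℂ H]
    (L : Set (Submodule ℂ H)) : Set (Submodule ℂ H) :=
  {N | N ∈ L ∧ N ≠ ⊥ ∧ minus L N ≠ ⊤}

/-- Subspaces are comparable if one contains the other. -/
def Comparable' {H : Type*} [NormedAddCommGroup H] [InnerProductSpace ℂ H]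
    (M N : Submodule ℂ H) : Prop :=
  M ≤ N ∨ N ≤ M

/-- There is a chain in `F` from `M` to `N`. -/
def ChainConn {H : Type*} [NormedAddCommGroup H] [InnerProductSpace ℂ H]
    (L : Set (Submodule ℂ H)) (M N : Submodule ℂ H) : Prop :=
  ∃ (n : ℕ) (c : Fin (n + 1) → Submodule ℂ H),
    (∀ k, c k ∈ famF L) ∧ c 0 = M ∧ c (Fin.last n) = N ∧
      ∀ k : Fin n, Comparable' (c k.castSucc) (c k.succ)

/-- `𝔊_N`: all members of `F` that can be connected to `N` by a chain. -/
def GSet {H : Type*} [NormedAddCommGroup H] [InnerProductSpace ℂ H]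
    (L : Set (Submodule ℂ H)) (N : Submodule ℂ H) : Set (Submodule ℂ H) :=
  {M | M ∈ famF L ∧ ChainConn L N M}

end

/-!
Over each `M ∈ F` the pair `(U, V)` implementing `Φ` is unique up to `(c U, (star c)⁻¹ V)`, and a
pair over a larger space restricts, up to such a factor, to a pair over a smaller one. The pairs
therefore form a covering of the ordered set `F`, and a global solution is a monotone section, which
exists once every closed zigzag in `F` lifts to a closed zigzag of pairs.

In a shortest zigzag violating this no two bottoms `Mᵢ` have a common lower bound in `F` and no two
tops `Nᵢ` a common upper bound. As the projections commute, the spaces `Mᵢ` are then pairwise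
orthogonal, and so are the spaces `(Nᵢ)₋^⊥`. Choose nonzero `xᵢ ∈ Mᵢ` and `fᵢ ∈ (Nᵢ)₋^⊥`. The
vectors `xᵢ - xᵢ₊₁` sum to zero around the loop, so `∑ i, (xᵢ - xᵢ₊₁) ⊗ fᵢ*` does not have full
rank. Going around the loop upstairs multiplies the pair by some `t ≠ 1`, which makes the images of
these vectors independent, so the image of that operator under `Φ` has full rank: a contradiction.

The maps of a monotone section agree on overlaps, and since the projections onto their domains
commute, pairwise agreement suffices to extend them to one linear map.
-/

section OrderCovering

variable {E P : Type*} [Preorder E] [Preorder P]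

/-- `Zigzag n x y`: there is a fence `x = a₀ ≤ b₀ ≥ a₁ ≤ b₁ ≥ ⋯ ≤ bₙ₋₁ ≥ aₙ = y` with `n` tops.
The length is recorded because the monodromy argument is an induction on it. -/
inductive Zigzag : ℕ → E → E → Prop
  | refl (x : E) : Zigzag 0 x x
  | cons {n : ℕ} {x b y z : E} : x ≤ b → y ≤ b → Zigzag n y z → Zigzag (n + 1) x z

namespace Zigzag

variable {m n : ℕ} {x y z b : E}

theorem single (hx : x ≤ b) (hy : y ≤ b) : Zigzag 1 x y :=
  cons hx hy (refl y)

theorem trans (h : Zigzag m x y) (h' : Zigzag n y z) : Zigzag (m + n) x z := by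
  induction h with
  | refl => simpa only [zero_add] using h'
  | cons hx hy _ ih =>
    rw [Nat.add_right_comm]
    exact cons hx hy (ih h')

theorem symm (h : Zigzag n x y) : Zigzag n y x := by
  induction h with
  | refl => exact refl _
  | cons hx hy _ ih => exact ih.trans (single hy hx)

theorem lower_left (h : Zigzag n x y) (hn : 0 < n) (hz : z ≤ x) : Zigzag n z y := by
  cases h with
  | refl => exact absurd hn (lt_irrefl 0)
  | cons hx hy h => exact cons (hz.trans hx) hy h

theorem lower_right (h : Zigzag n x y) (hn : 0 < n) (hz : z ≤ y) : Zigzag n x z :=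
  (h.symm.lower_left hn hz).symm

theorem exists_seq (h : Zigzag n x y) : ∃ A B : ℕ → E, A 0 = x ∧ A n = y ∧
    ∀ i < n, A i ≤ B i ∧ A (i + 1) ≤ B i := by
  induction h with
  | refl x => exact ⟨fun _ => x, fun _ => x, rfl, rfl, fun i hi => absurd hi i.not_lt_zero⟩
  | @cons n x b y z hx hy _ ih =>
    obtain ⟨A, B, hA₀, hAn, hAB⟩ := ih
    refine ⟨fun i => Nat.casesOn i x A, fun i => Nat.casesOn i b B, rfl, hAn, fun i hi => ?_⟩
    cases i with
    | zero => exact ⟨hx, hA₀.trans_le hy⟩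
    | succ i => exact hAB i (Nat.lt_of_succ_lt_succ hi)

theorem of_seq {A B : ℕ → E} (hAB : ∀ i < n, A i ≤ B i ∧ A (i + 1) ≤ B i) {i : ℕ} :
    ∀ k, i + k ≤ n → Zigzag k (A i) (A (i + k))
  | 0, _ => refl _
  | k + 1, hk =>
    (of_seq hAB k (by lia)).trans (single (hAB (i + k) (by lia)).1 (hAB (i + k) (by lia)).2)

end Zigzag

/-- A monotone map `p : E → P` along which relations of `P` lift downwards, and lift upwards
uniquely: the order-theoretic form of a covering projection. -/
structure IsOrderCovering (p : E → P) : Prop where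
  monotone : Monotone p
  exists_le : ∀ {e : E} {q : P}, q ≤ p e → ∃ e' ≤ e, p e' = q
  exists_ge : ∀ {e : E} {q : P}, p e ≤ q → ∃ e' ≥ e, p e' = q
  eq_of_ge : ∀ {e d d' : E}, e ≤ d → e ≤ d' → p d = p d' → d = d'

/-- A zigzag `A 0 ≤ B 0 ≥ A 1 ≤ ⋯ ≥ A n` whose image under `p` is a closed zigzag that cannot be
shortened: no two of its bottoms have a common lower bound, no two of its tops a common upper
bound. -/
structure IsIrreducibleLoop (p : E → P) (n : ℕ) (A B : ℕ → E) : Prop where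
  le : ∀ i < n, A i ≤ B i
  succ_le : ∀ i < n, A (i + 1) ≤ B i
  closed : p (A n) = p (A 0)
  not_bddBelow : ∀ i j, i < j → j < n → ∀ q, q ≤ p (A i) → ¬ q ≤ p (A j)
  not_bddAbove : ∀ i j, i < j → j < n → ∀ q, p (B i) ≤ q → ¬ p (B j) ≤ q

/-- Zigzags of length less than `n` over `p` that close up in the base close up upstairs. -/
def HasTrivialMonodromyBelow (p : E → P) (n : ℕ) : Prop :=
  ∀ m < n, ∀ ⦃x y : E⦄, Zigzag m x y → p x = p y → x = y

namespace IsOrderCovering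

variable {p : E → P} {n : ℕ}

theorem exists_zigzag (hp : IsOrderCovering p) {q q' : P} (h : Zigzag n q q') :
    ∀ {e : E}, p e = q → ∃ e', p e' = q' ∧ Zigzag n e e' := by
  induction h with
  | refl => exact fun he => ⟨_, he, .refl _⟩
  | cons hx hy _ ih =>
    intro e he
    obtain ⟨d, hed, rfl⟩ := hp.exists_ge (he.trans_le hx)
    obtain ⟨a, had, ha⟩ := hp.exists_le hy
    obtain ⟨e', he', hae'⟩ := ih ha
    exact ⟨e', he', .cons hed had hae'⟩

theorem eq_of_common_lower_bound (hp : IsOrderCovering p) (hn : HasTrivialMonodromyBelow p n)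
    {i k l : ℕ} {x a a' y : E} (hxa : Zigzag i x a) (haa' : Zigzag k a a') (ha'y : Zigzag l a' y)
    (hlen : i + k + l = n) (hk : 0 < k) (hl : 0 < l) (hxy : p x = p y)
    {q : P} (hqa : q ≤ p a) (hqa' : q ≤ p a') : x = y := by
  obtain ⟨c, hca, rfl⟩ := hp.exists_le hqa
  obtain ⟨c', hca', hc'⟩ := hp.exists_le hqa'
  obtain rfl : c = c' :=
    hn k (by lia) ((haa'.lower_left hk hca).lower_right hk hca') hc'.symm
  have hcy : Zigzag l c y := ha'y.lower_left hl hca'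
  rcases i.eq_zero_or_pos with rfl | hi
  · cases hxa
    obtain ⟨e, hey, he⟩ := hp.exists_le (hqa.trans_eq hxy)
    obtain rfl : c = e := hn l (by lia) (hcy.lower_right hl hey) he.symm
    exact hp.eq_of_ge hca hey hxy
  · exact hn (i + l) (by lia) ((hxa.lower_right hi hca).trans hcy) hxy

theorem eq_of_common_upper_bound (hp : IsOrderCovering p) (hn : HasTrivialMonodromyBelow p n)
    {i k l : ℕ} {x a b a₁ a' b' a₂ y : E} (hxa : Zigzag i x a) (hab : a ≤ b) (ha₁b : a₁ ≤ b)
    (ha₁a' : Zigzag k a₁ a') (hab' : a' ≤ b') (ha₂b' : a₂ ≤ b') (ha₂y : Zigzag l a₂ y)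
    (hlen : i + 1 + k + 1 + l = n) (hxy : p x = p y)
    {q : P} (hbq : p b ≤ q) (hb'q : p b' ≤ q) : x = y := by
  obtain ⟨d, hbd, rfl⟩ := hp.exists_ge hbq
  obtain ⟨d', hbd', hd'⟩ := hp.exists_ge hb'q
  obtain ⟨e, hed', he⟩ := hp.exists_le ((hp.monotone (ha₁b.trans hbd)).trans_eq hd'.symm)
  obtain rfl : a₁ = e :=
    hn (k + 1) (by lia) (ha₁a'.trans (.single (hab'.trans hbd') hed')) he.symm
  obtain rfl : d = d' := hp.eq_of_ge (ha₁b.trans hbd) hed' hd'.symm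
  exact hn (i + 1 + l) (by lia)
    ((hxa.trans (.single (hab.trans hbd) (ha₂b'.trans hbd'))).trans ha₂y) hxy

theorem eq_of_zigzag (hp : IsOrderCovering p)
    (hloop : ∀ n A B, IsIrreducibleLoop p n A B → A n = A 0)
    {x y : E} (h : Zigzag n x y) (hxy : p x = p y) : x = y := by
  induction n using Nat.strong_induction_on generalizing x y with
  | _ n ih =>
  have hn : HasTrivialMonodromyBelow p n := fun m hm _ _ h hxy => ih m hm h hxy
  obtain ⟨A, B, rfl, rfl, hAB⟩ := h.exists_seq
  by_contra hne
  refine hne (hloop n A B ⟨fun i hi => (hAB i hi).1, fun i hi => (hAB i hi).2, hxy.symm,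
    fun i j hij hjn q hqi hqj => hne ?_, fun i j hij hjn q hiq hjq => hne ?_⟩).symm
  · have before := Zigzag.of_seq hAB (i := 0) i (by lia)
    have between := Zigzag.of_seq hAB (i := i) (j - i) (by lia)
    have after := Zigzag.of_seq hAB (i := j) (n - j) (by lia)
    rw [Nat.zero_add] at before
    rw [Nat.add_sub_cancel' (by lia)] at between after
    exact hp.eq_of_common_lower_bound hn before between after (by lia) (by lia) (by lia) hxy hqi hqj
  · have before := Zigzag.of_seq hAB (i := 0) i (by lia)
    have between := Zigzag.of_seq hAB (i := i + 1) (j - (i + 1)) (by lia)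
    have after := Zigzag.of_seq hAB (i := j + 1) (n - (j + 1)) (by lia)
    rw [Nat.zero_add] at before
    rw [Nat.add_sub_cancel' (by lia)] at between after
    exact hp.eq_of_common_upper_bound hn before (hAB i (by lia)).1 (hAB i (by lia)).2 between
      (hAB j hjn).1 (hAB j hjn).2 after (by lia) hxy hiq hjq

theorem exists_monotone_section (hp : IsOrderCovering p) (hsurj : Function.Surjective p)
    (hmono : ∀ {n : ℕ} {x y : E}, Zigzag n x y → p x = p y → x = y) :
    ∃ s : P → E, Monotone s ∧ ∀ q, p (s q) = q := by
  let S : Setoid P :=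
    { r := fun q q' => ∃ n, Zigzag n q q'
      iseqv := ⟨fun q => ⟨0, .refl q⟩, fun ⟨n, h⟩ => ⟨n, h.symm⟩,
        fun ⟨m, h⟩ ⟨n, h'⟩ => ⟨m + n, h.trans h'⟩⟩ }
  choose base hbase using hsurj
  have exists_lift (q : P) : ∃ e, p e = q ∧ ∃ n, Zigzag n (base (Quotient.mk S q).out) e := by
    obtain ⟨n, h⟩ : ∃ n, Zigzag n (Quotient.mk S q).out q := Quotient.mk_out (s := S) q
    obtain ⟨e, he, h'⟩ := hp.exists_zigzag h (hbase _)
    exact ⟨e, he, n, h'⟩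
  choose s hps hs using exists_lift
  refine ⟨s, fun q q' hqq' => ?_, hps⟩
  obtain ⟨d, hd, rfl⟩ := hp.exists_ge ((hps q).trans_le hqq')
  obtain ⟨m, hm⟩ := hs q
  obtain ⟨n, hn⟩ := hs (p d)
  have same_class : Quotient.mk S q = Quotient.mk S (p d) :=
    Quotient.sound ⟨1, .single hqq' le_rfl⟩
  rw [← same_class] at hn
  exact hd.trans_eq (hmono ((Zigzag.single le_rfl hd).trans (hm.symm.trans hn)) (hps _).symm)

end IsOrderCovering

end OrderCovering

section CyclicDifferences

variable {K V : Type*} [DivisionRing K] [AddCommGroup V] [Module K V] {n : ℕ}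

theorem linearIndependent_sub_succ {y : ℕ → V} {t : K}
    (hy : LinearIndependent K fun i : Fin n => y i) (hyn : y n = t • y 0) (ht : t ≠ 1) :
    LinearIndependent K fun i : Fin n => y i - y (i + 1) := by
  set S := Submodule.span K (Set.range fun i : Fin n => y i - y (i + 1))
  have sub_mem (i : ℕ) (hi : i < n) : y i - y (i + 1) ∈ S := Submodule.subset_span ⟨⟨i, hi⟩, rfl⟩
  have zero_mem : y 0 ∈ S := by
    have h : (1 - t) • y 0 ∈ S := by
      rw [sub_smul, one_smul, ← hyn, ← Finset.sum_range_sub']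
      exact S.sum_mem fun i hi => sub_mem i (Finset.mem_range.mp hi)
    exact (S.smul_mem_iff (sub_ne_zero.mpr ht.symm)).mp h
  have mem (i : ℕ) (hi : i ≤ n) : y i ∈ S := by
    induction i with
    | zero => exact zero_mem
    | succ i ih => exact (S.sub_mem_iff_right (ih (by lia))).mp (sub_mem i hi)
  rw [linearIndependent_iff_card_le_finrank_span] at hy ⊢
  have : Module.Finite K S := .span_of_finite K (Set.finite_range _)
  exact hy.trans (Submodule.finrank_mono
    (Submodule.span_le.mpr (Set.range_subset_iff.mpr fun i => mem i i.2.le)))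

theorem not_linearIndependent_sub_succ (hn : 0 < n) {x : ℕ → V} (hx : x n = x 0) :
    ¬LinearIndependent K fun i : Fin n => x i - x (i + 1) := fun h => by
  have sum_eq_zero : ∑ i : Fin n, (1 : K) • (x i - x (i + 1)) = 0 := by
    simp only [one_smul]
    rw [Fin.sum_univ_eq_sum_range fun i => x i - x (i + 1), Finset.sum_range_sub', hx, sub_self]
  exact one_ne_zero (Fintype.linearIndependent_iff.mp h _ sum_eq_zero ⟨0, hn⟩)

end CyclicDifferences

section Gluing

-- Subtracting from every term its projection onto the space of the term `b` removes that term, so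
-- an induction on the number of terms applies.
theorem sum_apply_eq_zero_of_sum_eq_zero {R E F ι κ : Type*} [Ring R]
    [AddCommGroup E] [Module R E] [AddCommGroup F] [Module R F]
    {S : ι → Submodule R E} {p : ι → E →ₗ[R] E} {u : ι → E →ₗ[R] F}
    (hp : ∀ i, LinearMap.IsProj (S i) (p i)) (hpS : ∀ i j, Set.MapsTo (p i) (S j) (S j))
    (hu : ∀ i j, ∀ x ∈ S i ⊓ S j, u i x = u j x)
    (a : κ → ι) (s : Finset κ) {x : κ → E} (hx : ∀ k, x k ∈ S (a k)) (hsum : ∑ k ∈ s, x k = 0) :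
    ∑ k ∈ s, u (a k) (x k) = 0 := by
  classical
  induction s using Finset.induction_on generalizing x with
  | empty => exact Finset.sum_empty
  | insert b s hb ih =>
    rw [Finset.sum_insert hb] at hsum ⊢
    have hxb : x b = -∑ k ∈ s, x k := eq_neg_of_add_eq_zero_left hsum
    have hxb_proj : x b = -∑ k ∈ s, p (a b) (x k) := by
      rw [← map_sum, ← map_neg, ← hxb, (hp _).map_id _ (hx b)]
    have image_xb : u (a b) (x b) = -∑ k ∈ s, u (a k) (p (a b) (x k)) := by
      rw [hxb_proj, map_neg, map_sum]
      exact congrArg _ (Finset.sum_congr rfl fun k _ =>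
        hu _ _ _ ⟨(hp _).map_mem _, hpS _ _ (hx k)⟩)
    have residual_sum : ∑ k ∈ s, (x k - p (a b) (x k)) = 0 := by
      rw [Finset.sum_sub_distrib, sub_eq_zero]
      exact neg_injective (hxb.symm.trans hxb_proj)
    have image_residual := ih (fun k => sub_mem (hx k) (hpS _ _ (hx k))) residual_sum
    simp only [map_sub, Finset.sum_sub_distrib] at image_residual
    rw [image_xb, neg_add_eq_sub, image_residual]

theorem exists_linearMap_extending {K E F ι : Type*} [DivisionRing K] [AddCommGroup E] [Module K E]
    [AddCommGroup F] [Module K F] (f : ι → E →ₗ.[K] F) (p : ι → E →ₗ[K] E)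
    (hp : ∀ i, LinearMap.IsProj (f i).domain (p i))
    (hpf : ∀ i j, Set.MapsTo (p i) (f j).domain (f j).domain)
    (hf : ∀ i j (x : (f i).domain) (y : (f j).domain), (x : E) = y → f i x = f j y) :
    ∃ g : E →ₗ[K] F, ∀ i (x : (f i).domain), g x = f i x := by
  choose u hu using fun i => (f i).toFun.exists_extend
  have hu' (i) (x : (f i).domain) : u i x = f i x := LinearMap.congr_fun (hu i) x
  have hagree (i j) (x : E) (hx : x ∈ (f i).domain ⊓ (f j).domain) : u i x = u j x :=
    (hu' i ⟨x, hx.1⟩).trans ((hf i j ⟨x, hx.1⟩ ⟨x, hx.2⟩ rfl).trans (hu' j ⟨x, hx.2⟩).symm)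
  let total : ((Σ i, (f i).domain) →₀ K) →ₗ[K] E := Finsupp.linearCombination K fun x => (x.2 : E)
  let image : ((Σ i, (f i).domain) →₀ K) →ₗ[K] F := Finsupp.linearCombination K fun x => f x.1 x.2
  have ker_le : LinearMap.ker total ≤ LinearMap.ker image := fun l hl => by
    have := sum_apply_eq_zero_of_sum_eq_zero hp hpf hagree (fun x => x.1) l.support
      (fun x => Submodule.smul_mem _ (l x) x.2.2) hl
    simpa only [map_smul, hu'] using! this
  obtain ⟨g, hg⟩ := LinearMap.exists_extend
    ((LinearMap.ker total).liftQ image ker_le ∘ₗ total.quotKerEquivRange.symm.toLinearMap)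
  have hg_total (l) : g (total l) = image l :=
    (LinearMap.congr_fun hg ⟨total l, l, rfl⟩).trans <|
      congrArg _ (total.quotKerEquivRange_symm_apply_image l _)
  refine ⟨g, fun i x => ?_⟩
  simpa only [total, image, Finsupp.linearCombination_single, one_smul]
    using hg_total (Finsupp.single ⟨i, x⟩ 1)

end Gluing

section RankOne

variable {𝕜 E F : Type*} [RCLike 𝕜] [NormedAddCommGroup E] [InnerProductSpace 𝕜 E]
  [NormedAddCommGroup F] [InnerProductSpace 𝕜 F]

theorem exists_unit_of_rankOne_eq_rankOne {X Y : Type*} {u u' : X → E} {v v' : Y → F}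
    (h : ∀ x y, InnerProductSpace.rankOne 𝕜 (u x) (v y) =
      InnerProductSpace.rankOne 𝕜 (u' x) (v' y))
    {x₀ : X} {y₀ : Y} (hu : u x₀ ≠ 0) (hv : v y₀ ≠ 0) :
    ∃ c : 𝕜ˣ, (∀ x, u' x = c • u x) ∧ ∀ y, v y = star c • v' y := by
  obtain ⟨α, -, hα, -, hu₀, -⟩ := InnerProductSpace.exists_of_rankOne_eq_rankOne hu hv (h x₀ y₀)
  have hu₀' : u' x₀ ≠ 0 := fun h0 => hu (by rw [hu₀, h0, smul_zero])
  have hv' (y : Y) : v' y = star α • v y := by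
    rw [← sub_eq_zero]
    refine (InnerProductSpace.rankOne_eq_zero (𝕜 := 𝕜).mp ?_).resolve_left hu₀'
    simp [← h, hu₀]
  have hu' (x : X) : u x = α • u' x := by
    rw [← sub_eq_zero]
    refine (InnerProductSpace.rankOne_eq_zero (𝕜 := 𝕜).mp ?_).resolve_right hv
    simp [h, hv']
  refine ⟨(Units.mk0 α hα)⁻¹, fun x => ?_, fun y => ?_⟩
  · rw [hu', Units.smul_def, Units.val_inv_eq_inv_val, Units.val_mk0, inv_smul_smul₀ hα]
  · rw [hv', Units.smul_def]
    simp [smul_smul, hα]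

theorem surjective_inner_iff_linearIndependent {ι : Type*} [Finite ι] {g : ι → E} :
    Function.Surjective (fun (h : E) i => ⟪g i, h⟫_𝕜) ↔ LinearIndependent 𝕜 g := by
  classical
  have := Fintype.ofFinite ι
  constructor
  · intro hsurj
    refine Fintype.linearIndependent_iff.mpr fun c hc j => ?_
    obtain ⟨h, hh⟩ := hsurj (Pi.single j 1)
    have : ⟪∑ i, c i • g i, h⟫_𝕜 = star (c j) := by
      simp [sum_inner, inner_smul_left, congrFun hh _, Pi.single_apply]
    rw [hc, inner_zero_left] at this
    exact star_eq_zero.mp this.symm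
  · intro hg v
    have hunit : IsUnit (Matrix.gram 𝕜 g) :=
      (Matrix.isUnit_iff_isUnit_det _).mpr
        (isUnit_iff_ne_zero.mpr (Matrix.det_gram_ne_zero_iff_linearIndependent.mpr hg))
    obtain ⟨c, rfl⟩ := Matrix.mulVec_surjective_iff_isUnit.mpr hunit v
    refine ⟨∑ j, c j • g j, funext fun i => ?_⟩
    simp [Matrix.mulVec, dotProduct, Matrix.gram_apply, inner_sum, inner_smul_right, mul_comm]

end RankOne

section FiniteRank

variable {H ι : Type*} [NormedAddCommGroup H] [InnerProductSpace ℂ H] [Fintype ι]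

theorem range_sum_rankOne (z g : ι → H) :
    LinearMap.range ((∑ i, rankOne (z i) (g i) : H →L[ℂ] H) : H →ₗ[ℂ] H) =
      (LinearMap.range (LinearMap.pi fun i => (innerSL ℂ (g i) : H →ₗ[ℂ] ℂ))).map
        (Fintype.linearCombination ℂ z) := by
  rw [← LinearMap.range_comp]
  congr 1
  ext h
  simp [Fintype.linearCombination_apply, rankOne]

theorem opRank_sum_rankOne_lt_aleph0 (z g : ι → H) :
    opRank (∑ i, rankOne (z i) (g i)) < Cardinal.aleph0 := by
  rw [opRank, range_sum_rankOne]
  exact Module.rank_lt_aleph0 _ _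

theorem opRank_sum_rankOne_eq_card_iff {z g : ι → H} :
    opRank (∑ i, rankOne (z i) (g i)) = Fintype.card ι ↔
      LinearIndependent ℂ z ∧ LinearIndependent ℂ g := by
  rw [opRank, range_sum_rankOne, ← Module.finrank_eq_rank, Nat.cast_inj,
    ← surjective_inner_iff_linearIndependent (g := g), linearIndependent_iff_card_eq_finrank_span,
    Set.finrank, ← Fintype.range_linearCombination]
  set inners : H →ₗ[ℂ] ι → ℂ := LinearMap.pi fun i => (innerSL ℂ (g i) : H →ₗ[ℂ] ℂ)
  constructor
  · intro h
    have range_eq_top : LinearMap.range inners = ⊤ := by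
      refine Submodule.eq_top_of_finrank_eq (le_antisymm (Submodule.finrank_le _) ?_)
      rw [Module.finrank_fintype_fun_eq_card, ← h]
      exact Submodule.finrank_map_le _ _
    rw [range_eq_top, Submodule.map_top] at h
    exact ⟨h.symm, LinearMap.range_eq_top.mp range_eq_top⟩
  · rintro ⟨hz, hg⟩
    rw [LinearMap.range_eq_top.mpr hg, Submodule.map_top, ← hz]

end FiniteRank

section Orthogonality

variable {𝕜 E : Type*} [RCLike 𝕜] [NormedAddCommGroup E] [InnerProductSpace 𝕜 E]
  {K₁ K₂ : Submodule 𝕜 E} [K₁.HasOrthogonalProjection] [K₂.HasOrthogonalProjection]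

theorem mapsTo_starProjection_of_commute (h : Commute K₁.starProjection K₂.starProjection) :
    Set.MapsTo K₁.starProjection K₂ K₂ := fun x hx => by
  rw [← Submodule.starProjection_eq_self_iff.mpr hx]
  exact (congrArg (· ∈ K₂) (DFunLike.congr_fun h.eq x)).mpr (K₂.starProjection_apply_mem _)

theorem isOrtho_of_disjoint_of_commute (h : Commute K₁.starProjection K₂.starProjection)
    (hK : Disjoint K₁ K₂) : K₁ ⟂ K₂ :=
  Submodule.IsOrtho.symm fun x hx => K₁.starProjection_apply_eq_zero_iff.mp <|
    hK.le_bot ⟨K₁.starProjection_apply_mem x, mapsTo_starProjection_of_commute h hx⟩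

theorem commute_starProjection_orthogonal (h : Commute K₁.starProjection K₂.starProjection) :
    Commute K₁ᗮ.starProjection K₂ᗮ.starProjection := by
  rw [Submodule.starProjection_orthogonal', Submodule.starProjection_orthogonal']
  exact ((Commute.one_left _).sub_left ((Commute.one_right _).sub_right h))

theorem exists_linearMap_extending_of_commute {F ι : Type*} [AddCommGroup F] [Module 𝕜 F]
    {f : ι → E →ₗ.[𝕜] F} {K : ι → Submodule 𝕜 E} [∀ i, (K i).HasOrthogonalProjection]
    (hfK : ∀ i, (f i).domain = K i)
    (hcomm : ∀ i j, Commute (K i).starProjection (K j).starProjection)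
    (hf : ∀ i j x, x ≠ 0 → x ∈ K i → x ∈ K j → ∃ k, f k ≤ f i ∧ f k ≤ f j ∧ x ∈ K k) :
    ∃ g : E →ₗ[𝕜] F, ∀ i (x : (f i).domain), g x = f i x := by
  refine exists_linearMap_extending f (fun i => ((K i).starProjection : E →ₗ[𝕜] E)) (fun i => ?_)
    (fun i j => ?_) fun i j x y hxy => ?_
  · rw [hfK]
    exact ⟨Submodule.starProjection_apply_mem _, fun _ => Submodule.starProjection_eq_self_iff.mpr⟩
  · rw [hfK]
    exact mapsTo_starProjection_of_commute (hcomm i j)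
  · rcases eq_or_ne (x : E) 0 with hx₀ | hx₀
    · rw [show x = 0 from Subtype.ext hx₀, show y = 0 from Subtype.ext (hxy ▸ hx₀),
        LinearPMap.map_zero, LinearPMap.map_zero]
    · obtain ⟨k, hki, hkj, hk⟩ := hf i j x hx₀ (hfK i ▸ x.2) (hxy ▸ hfK j ▸ y.2)
      rw [← hfK] at hk
      exact (hki.2 (x := ⟨x, hk⟩) rfl).symm.trans (hkj.2 hxy)

theorem linearIndependent_of_isOrtho {n : ℕ} {K : ℕ → Submodule 𝕜 E} {x : ℕ → E}
    (hK : ∀ i j, i < j → j < n → K i ⟂ K j) (hx : ∀ i, x i ∈ K i) (hx₀ : ∀ i, x i ≠ 0) :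
    LinearIndependent 𝕜 fun i : Fin n => x i := by
  refine linearIndependent_of_ne_zero_of_inner_eq_zero (fun i => hx₀ i) fun i j hij => ?_
  rcases Fin.lt_or_lt_of_ne hij with h | h
  · exact (hK i j h j.2).inner_eq (hx i) (hx j)
  · exact (hK j i h i.2).symm.inner_eq (hx i) (hx j)

end Orthogonality

section SubspaceLattice

variable {H : Type*} [NormedAddCommGroup H] [InnerProductSpace ℂ H] {L : Set (Submodule ℂ H)}
  {M M' : Submodule ℂ H}

theorem mem_orthogonal_minus_iff {z : H} :
    z ∈ (minus L M)ᗮ ↔ ∀ E ∈ L, ¬M ≤ E → z ∈ Eᗮ := by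
  simp only [minus, closedJoin, Submodule.orthogonal_closure, ← Submodule.sInf_orthogonal,
    Submodule.mem_iInf, Set.mem_ofPred_eq, and_imp]

theorem orthogonal_minus_anti (h : M ≤ M') : (minus L M')ᗮ ≤ (minus L M)ᗮ := fun _ hz =>
  mem_orthogonal_minus_iff.mpr fun E hE hM =>
    mem_orthogonal_minus_iff.mp hz E hE fun hM' => hM (h.trans hM')

theorem rankOne_mem_algL {x f : H} (hx : x ∈ M) (hf : f ∈ (minus L M)ᗮ) :
    rankOne x f ∈ algL L := fun E hE h hh => by
  change ⟪f, h⟫_ℂ • x ∈ E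
  by_cases hM : M ≤ E
  · exact E.smul_mem _ (hM hx)
  · rw [Submodule.inner_left_of_mem_orthogonal hh (mem_orthogonal_minus_iff.mp hf E hE hM),
      zero_smul]
    exact E.zero_mem

theorem le_closedJoin {S : Set (Submodule ℂ H)} (hM : M ∈ S) : M ≤ closedJoin S :=
  (le_sSup hM).trans (Submodule.le_topologicalClosure _)

namespace IsSubspaceLattice

variable (hL : IsSubspaceLattice L)
include hL

theorem minus_mem (M : Submodule ℂ H) : minus L M ∈ L :=
  hL.join_mem _ fun _ h => h.1

theorem inf_mem (hM : M ∈ L) (hM' : M' ∈ L) : M ⊓ M' ∈ L := by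
  rw [← sInf_pair]
  exact hL.sInf_mem _ (Set.pair_subset hM hM')

theorem closedJoin_le {S : Set (Submodule ℂ H)} (hM : M ∈ L) (hS : ∀ E ∈ S, E ≤ M) :
    closedJoin S ≤ M :=
  Submodule.topologicalClosure_minimal _ (sSup_le hS) (hL.isClosed M hM)

theorem mem_orthogonal_minus_closedJoin {S : Set (Submodule ℂ H)} {z : H}
    (hz : ∀ E ∈ S, z ∈ (minus L E)ᗮ) : z ∈ (minus L (closedJoin S))ᗮ :=
  mem_orthogonal_minus_iff.mpr fun F hF hSF => by
    obtain ⟨E, hE, hEF⟩ : ∃ E ∈ S, ¬E ≤ F := by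
      by_contra! h
      exact hSF (hL.closedJoin_le hF h)
    exact mem_orthogonal_minus_iff.mp (hz E hE) F hF hEF

variable [CompleteSpace H]

theorem hasOrthogonalProjection (hM : M ∈ L) : M.HasOrthogonalProjection :=
  have := (hL.isClosed M hM).completeSpace_coe
  inferInstance

theorem orthogonal_minus_eq_bot_iff : (minus L M)ᗮ = ⊥ ↔ minus L M = ⊤ :=
  have := hL.hasOrthogonalProjection (hL.minus_mem M)
  Submodule.orthogonal_eq_bot_iff

theorem mem_famF_of_le (hM : M ∈ L) (hM₀ : M ≠ ⊥) (h : M ≤ M') (hM' : M' ∈ famF L) :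
    M ∈ famF L := by
  refine ⟨hM, hM₀, fun h_top => hM'.2.2 ?_⟩
  rw [← hL.orthogonal_minus_eq_bot_iff] at h_top ⊢
  exact eq_bot_mono (orthogonal_minus_anti h) h_top

theorem inf_mem_famF (hM : M ∈ famF L) (hM' : M' ∈ famF L) {x : H} (hx₀ : x ≠ 0) (hx : x ∈ M)
    (hx' : x ∈ M') : M ⊓ M' ∈ famF L :=
  hL.mem_famF_of_le (hL.inf_mem hM.1 hM'.1)
    ((Submodule.ne_bot_iff _).mpr ⟨x, ⟨hx, hx'⟩, hx₀⟩) inf_le_left hM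

theorem closedJoin_pair_mem_famF (hM : M ∈ famF L) (hM' : M' ∈ famF L) {f : H} (hf₀ : f ≠ 0)
    (hf : f ∈ (minus L M)ᗮ) (hf' : f ∈ (minus L M')ᗮ) :
    closedJoin {M, M'} ∈ famF L ∧ f ∈ (minus L (closedJoin {M, M'}))ᗮ := by
  have mem : f ∈ (minus L (closedJoin {M, M'}))ᗮ :=
    hL.mem_orthogonal_minus_closedJoin (by simpa using ⟨hf, hf'⟩)
  refine ⟨⟨hL.join_mem _ (Set.pair_subset hM.1 hM'.1), fun h => hM.2.1 ?_, fun h => hf₀ ?_⟩, mem⟩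
  · exact eq_bot_mono (le_closedJoin (Set.mem_insert _ _)) h
  · rwa [hL.orthogonal_minus_eq_bot_iff.mpr h] at mem

theorem exists_ne_zero_mem_orthogonal_minus (hM : M ∈ famF L) : ∃ f ∈ (minus L M)ᗮ, f ≠ 0 :=
  (Submodule.ne_bot_iff _).mp (hL.orthogonal_minus_eq_bot_iff.not.mpr hM.2.2)

end IsSubspaceLattice

section CSL

variable [CompleteSpace H]

theorem projOf_eq_starProjection [M.HasOrthogonalProjection] :
    projOf M = M.starProjection := by
  have hM : IsClosed (M : Set H) := M.orthogonal_orthogonal ▸ Mᗮ.isClosed_orthogonal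
  rw [projOf, dif_pos hM]
  rfl

theorem IsCSL.commute_starProjection (hL : IsCSL L) (hM : M ∈ L) (hM' : M' ∈ L)
    [M.HasOrthogonalProjection] [M'.HasOrthogonalProjection] :
    Commute M.starProjection M'.starProjection := by
  simpa only [projOf_eq_starProjection] using! hL.commutes M hM M' hM'

end CSL

end SubspaceLattice

section CSLFamily

variable {H : Type*} [NormedAddCommGroup H] [InnerProductSpace ℂ H] [CompleteSpace H]
  {L : Set (Submodule ℂ H)} {M M' : famF L}

theorem IsCSL.isOrtho_of_not_bddBelow (hL : IsCSL L) (h : ∀ q : famF L, q ≤ M → ¬q ≤ M') :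
    (M : Submodule ℂ H) ⟂ M' := by
  have := hL.hasOrthogonalProjection M.2.1
  have := hL.hasOrthogonalProjection M'.2.1
  refine isOrtho_of_disjoint_of_commute (hL.commute_starProjection M.2.1 M'.2.1)
    (Submodule.disjoint_def.mpr fun x hx hx' => by_contra fun hx₀ => ?_)
  exact h ⟨M ⊓ M', hL.inf_mem_famF M.2 M'.2 hx₀ hx hx'⟩
    (Subtype.coe_le_coe.mp inf_le_left) (Subtype.coe_le_coe.mp inf_le_right)

theorem IsCSL.isOrtho_orthogonal_minus_of_not_bddAbove (hL : IsCSL L)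
    (h : ∀ q : famF L, M ≤ q → ¬M' ≤ q) : (minus L (M : Submodule ℂ H))ᗮ ⟂ (minus L M')ᗮ := by
  have hM := hL.minus_mem M
  have hM' := hL.minus_mem M'
  have := hL.hasOrthogonalProjection hM
  have := hL.hasOrthogonalProjection hM'
  refine isOrtho_of_disjoint_of_commute
    (commute_starProjection_orthogonal (hL.commute_starProjection hM hM'))
    (Submodule.disjoint_def.mpr fun f hf hf' => by_contra fun hf₀ => ?_)
  exact h ⟨_, (hL.closedJoin_pair_mem_famF M.2 M'.2 hf₀ hf hf').1⟩
    (le_closedJoin (Set.mem_insert _ _)) (le_closedJoin (Set.mem_insert_of_mem _ rfl))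

end CSLFamily

section LocalPair

variable {H : Type*} [NormedAddCommGroup H] [InnerProductSpace ℂ H]
  {L : Set (Submodule ℂ H)} {Φ : (H →L[ℂ] H) → (H →L[ℂ] H)}

theorem sum_mem_algL {ι : Type*} {s : Finset ι} {T : ι → H →L[ℂ] H}
    (hT : ∀ i ∈ s, T i ∈ algL L) : ∑ i ∈ s, T i ∈ algL L := fun E hE x hx => by
  rw [sum_apply]
  exact E.sum_mem fun i hi => hT i hi E hE x hx

theorem IsLinearOnAlg.map_sum (hlin : IsLinearOnAlg L Φ) {ι : Type*} (s : Finset ι)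
    {T : ι → H →L[ℂ] H} (hT : ∀ i ∈ s, T i ∈ algL L) :
    Φ (∑ i ∈ s, T i) = ∑ i ∈ s, Φ (T i) := by
  induction s using Finset.cons_induction with
  | empty => simpa using hlin.map_smul 0 0 fun E _ _ _ => E.zero_mem
  | cons a s ha ih =>
    have hs : ∀ i ∈ s, T i ∈ algL L := fun i hi => hT i (Finset.mem_cons_of_mem hi)
    rw [Finset.sum_cons, Finset.sum_cons, ← ih hs]
    exact hlin.map_add _ (hT a (Finset.mem_cons_self a s)) _ (sum_mem_algL hs)

variable (L Φ) in
/-- A space `M ∈ F` together with one of the pairs `(U, V)` implementing `Φ` on the rank one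
operators `x ⊗ f*` with `x ∈ M` and `f ∈ M₋^⊥`. The maps are partially defined so that pairs over
different spaces can be compared. -/
structure LocalPair where
  space : famF L
  U : H →ₗ.[ℂ] H
  V : H →ₗ.[ℂ] H
  domain_U : U.domain = space
  domain_V : V.domain = (minus L space)ᗮ
  map_rankOne : ∀ (x : U.domain) (f : V.domain), Φ (rankOne (x : H) (f : H)) = rankOne (U x) (V f)

namespace LocalPair

/-- `d ≤ e` if the two pairs agree wherever both are defined and `d.space ≤ e.space`; the domain
of `V` shrinks as the space grows. -/
instance : Preorder (LocalPair L Φ) := Preorder.lift fun e => (e.U, OrderDual.toDual e.V)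

variable {d e : LocalPair L Φ}

theorem mem_domain_U {x : H} : x ∈ e.U.domain ↔ x ∈ (e.space : Submodule ℂ H) := by
  rw [e.domain_U]

theorem mem_domain_V {f : H} : f ∈ e.V.domain ↔ f ∈ (minus L (e.space : Submodule ℂ H))ᗮ := by
  rw [e.domain_V]

theorem U_le (h : d ≤ e) : d.U ≤ e.U :=
  h.1

theorem V_le (h : d ≤ e) : e.V ≤ d.V :=
  h.2

theorem monotone_space : Monotone (space : LocalPair L Φ → famF L) := fun d e h => by
  change (d.space : Submodule ℂ H) ≤ e.space
  rw [← d.domain_U, ← e.domain_U]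
  exact (U_le h).1

theorem U_apply_eq (h : d ≤ e) {x : d.U.domain} {x' : e.U.domain} (hx : (x : H) = x') :
    d.U x = e.U x' :=
  (U_le h).2 hx

theorem le_of_apply_eq (hdomU : d.U.domain ≤ e.U.domain) (hdomV : e.V.domain ≤ d.V.domain)
    (hU : ∀ x : d.U.domain, d.U x = e.U ⟨x, hdomU x.2⟩)
    (hV : ∀ f : e.V.domain, e.V f = d.V ⟨f, hdomV f.2⟩) : d ≤ e :=
  ⟨⟨hdomU, fun x _ h => (hU x).trans (congrArg e.U (Subtype.ext h))⟩,
    ⟨hdomV, fun f _ h => (hV f).trans (congrArg d.V (Subtype.ext h))⟩⟩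

theorem eq_of_le (h : d ≤ e) (hspace : d.space = e.space) : d = e := by
  have hU : d.U = e.U :=
    LinearPMap.eq_of_le_of_domain_eq (U_le h) (by rw [d.domain_U, e.domain_U, hspace])
  have hV : e.V = d.V :=
    LinearPMap.eq_of_le_of_domain_eq (V_le h) (by rw [d.domain_V, e.domain_V, hspace])
  cases d
  cases e
  simp_all only

/-- The pair `(c U, (star c)⁻¹ V)`: the only freedom in the choice of a pair over a given space. -/
def rescale (c : ℂˣ) (e : LocalPair L Φ) : LocalPair L Φ where
  space := e.space
  U := c • e.U
  V := (star c)⁻¹ • e.V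
  domain_U := e.domain_U
  domain_V := e.domain_V
  map_rankOne x f := by
    rw [e.map_rankOne x f]
    ext h
    change ⟪e.V f, h⟫_ℂ • e.U x = ⟪(star c)⁻¹ • e.V f, h⟫_ℂ • c • e.U x
    simp [Units.smul_def, smul_smul, mul_comm]

theorem exists_space_eq (hcons : ∀ M ∈ famF L, Consistent L Φ M) (M : famF L) :
    ∃ e : LocalPair L Φ, e.space = M := by
  obtain ⟨-, -, U, V, hUV⟩ := hcons M M.2
  exact ⟨⟨M, ⟨M, U⟩, ⟨(minus L M)ᗮ, V⟩, rfl, rfl, hUV⟩, rfl⟩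

variable (hlin : IsLinearOnAlg L Φ) (hrank : RankPreserving L Φ)
include hlin hrank

theorem linearIndependent_apply_iff {ι : Type*} [Finite ι] (d : ι → LocalPair L Φ)
    (z : ∀ i, (d i).U.domain) (f : ∀ i, (d i).V.domain) :
    (LinearIndependent ℂ fun i => (d i).U (z i)) ∧ (LinearIndependent ℂ fun i => (d i).V (f i)) ↔
      (LinearIndependent ℂ fun i => (z i : H)) ∧ LinearIndependent ℂ fun i => (f i : H) := by
  have := Fintype.ofFinite ι
  have mem_algL (i : ι) : rankOne (z i : H) (f i : H) ∈ algL L :=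
    rankOne_mem_algL (mem_domain_U.mp (z i).2) (mem_domain_V.mp (f i).2)
  rw [← opRank_sum_rankOne_eq_card_iff, ← opRank_sum_rankOne_eq_card_iff,
    ← hrank _ (sum_mem_algL fun i _ => mem_algL i) (opRank_sum_rankOne_lt_aleph0 _ _),
    hlin.map_sum _ fun i _ => mem_algL i]
  simp only [map_rankOne]

theorem apply_ne_zero {x : e.U.domain} {f : e.V.domain} (hx : (x : H) ≠ 0) (hf : (f : H) ≠ 0) :
    e.U x ≠ 0 ∧ e.V f ≠ 0 := by
  simpa only [linearIndependent_unique_iff] using!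
    (linearIndependent_apply_iff hlin hrank (fun _ : Unit => e) (fun _ => x) fun _ => f).mpr
      ⟨linearIndependent_unique_iff.mpr hx, linearIndependent_unique_iff.mpr hf⟩

variable [CompleteSpace H] (hL : IsSubspaceLattice L)
include hL

theorem exists_rescale_le (h : d.space ≤ e.space) :
    ∃ c : ℂˣ, d.rescale c ≤ e ∧ d ≤ e.rescale c⁻¹ := by
  have hU : d.U.domain ≤ e.U.domain :=
    d.domain_U.trans_le ((Subtype.coe_le_coe.mpr h).trans_eq e.domain_U.symm)
  have hV : e.V.domain ≤ d.V.domain :=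
    e.domain_V.trans_le ((orthogonal_minus_anti h).trans_eq d.domain_V.symm)
  obtain ⟨x, hx, hx₀⟩ := (Submodule.ne_bot_iff _).mp d.space.2.2.1
  obtain ⟨f, hf, hf₀⟩ := hL.exists_ne_zero_mem_orthogonal_minus e.space.2
  rw [← mem_domain_U] at hx
  rw [← mem_domain_V] at hf
  have rankOne_eq (x : d.U.domain) (f : e.V.domain) :
      InnerProductSpace.rankOne ℂ (d.U x) (d.V ⟨f, hV f.2⟩) =
        InnerProductSpace.rankOne ℂ (e.U ⟨x, hU x.2⟩) (e.V f) :=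
    (d.map_rankOne x ⟨f, hV f.2⟩).symm.trans (e.map_rankOne ⟨x, hU x.2⟩ f)
  obtain ⟨hUx, hVf⟩ :=
    apply_ne_zero hlin hrank (e := d) (x := ⟨x, hx⟩) (f := ⟨f, hV hf⟩) hx₀ hf₀
  obtain ⟨c, hcU, hcV⟩ := exists_unit_of_rankOne_eq_rankOne rankOne_eq (x₀ := ⟨x, hx⟩)
    (y₀ := ⟨f, hf⟩) hUx hVf
  have hcU' (x : d.U.domain) : d.U x = c⁻¹ • e.U ⟨x, hU x.2⟩ := by rw [hcU, inv_smul_smul]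
  have hcV' (f : e.V.domain) : e.V f = (star c)⁻¹ • d.V ⟨f, hV f.2⟩ := by
    rw [hcV, inv_smul_smul]
  have hcV_inv (f : e.V.domain) : (star c⁻¹)⁻¹ • e.V f = d.V ⟨f, hV f.2⟩ := by
    rw [hcV, star_inv, inv_inv]
  exact ⟨c, le_of_apply_eq hU hV (fun x => (hcU x).symm) hcV', le_of_apply_eq hU hV hcU' hcV_inv⟩

theorem exists_U_apply_eq_smul (hspace : d.space = e.space) :
    ∃ c : ℂˣ, (c = 1 → d = e) ∧
      ∀ (x : d.U.domain) (x' : e.U.domain), (x : H) = x' → e.U x' = c • d.U x := by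
  obtain ⟨c, hc, -⟩ := exists_rescale_le hlin hrank hL hspace.le
  refine ⟨c, ?_, fun x x' hx => (U_apply_eq hc hx).symm⟩
  rintro rfl
  have rescale_one : d.rescale 1 = d := by simp [rescale]
  exact eq_of_le (rescale_one ▸ hc) hspace

theorem eq_of_U_apply_eq (hspace : d.space = e.space) {x : d.U.domain} {x' : e.U.domain}
    (hx : (x : H) ≠ 0) (hxx' : (x : H) = x') (h : d.U x = e.U x') : d = e := by
  obtain ⟨c, hc, hcU⟩ := exists_U_apply_eq_smul hlin hrank hL hspace
  obtain ⟨f, hf, hf₀⟩ := hL.exists_ne_zero_mem_orthogonal_minus d.space.2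
  have hUx := (apply_ne_zero hlin hrank hx (f := ⟨f, mem_domain_V.mpr hf⟩) hf₀).1
  refine hc (Units.ext (smul_left_injective ℂ hUx ?_))
  simpa [Units.smul_def] using (h.trans (hcU x x' hxx')).symm

theorem isOrderCovering_space (hcons : ∀ M ∈ famF L, Consistent L Φ M) :
    IsOrderCovering (space : LocalPair L Φ → famF L) where
  monotone := monotone_space
  exists_le {e q} hq := by
    obtain ⟨d, rfl⟩ := exists_space_eq hcons q
    obtain ⟨c, hc, -⟩ := exists_rescale_le hlin hrank hL hq
    exact ⟨d.rescale c, hc, rfl⟩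
  exists_ge {e q} hq := by
    obtain ⟨d, rfl⟩ := exists_space_eq hcons q
    obtain ⟨c, -, hc⟩ := exists_rescale_le hlin hrank hL hq
    exact ⟨d.rescale c⁻¹, hc, rfl⟩
  eq_of_ge {e d d'} hd hd' hspace := by
    obtain ⟨x, hx, hx₀⟩ := (Submodule.ne_bot_iff _).mp e.space.2.2.1
    rw [← mem_domain_U] at hx
    exact eq_of_U_apply_eq hlin hrank hL hspace
      (x := ⟨x, (U_le hd).1 hx⟩) (x' := ⟨x, (U_le hd').1 hx⟩) hx₀ rfl
      ((U_apply_eq hd (x := ⟨x, hx⟩) rfl).symm.trans (U_apply_eq hd' rfl))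

end LocalPair

end LocalPair

section Monodromy

variable {H : Type*} [NormedAddCommGroup H] [InnerProductSpace ℂ H] [CompleteSpace H]
  {L : Set (Submodule ℂ H)} {Φ : (H →L[ℂ] H) → (H →L[ℂ] H)}

-- If the zigzag did not close up, the image under `Φ` of the test operator
-- `∑ i, (xᵢ - xᵢ₊₁) ⊗ fᵢ*` would have full rank, although its left vectors sum to zero.
theorem LocalPair.last_eq_first_of_linearIndependent (hL : IsSubspaceLattice L)
    (hlin : IsLinearOnAlg L Φ) (hrank : RankPreserving L Φ) {n : ℕ} {A B : ℕ → LocalPair L Φ}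
    (hAB : ∀ i < n, A i ≤ B i ∧ A (i + 1) ≤ B i) (hspace : (A n).space = (A 0).space)
    {x f : ℕ → H} (hxA : ∀ i, x i ∈ (A i).U.domain) (hxn : x n = x 0)
    (hfB : ∀ i, f i ∈ (B i).V.domain) (hx : LinearIndependent ℂ fun i : Fin n => x i)
    (hf : LinearIndependent ℂ fun i : Fin n => f i) : A n = A 0 := by
  by_contra hne
  have hn : 0 < n := Nat.pos_of_ne_zero fun hn => hne (by rw [hn])
  let y (i : ℕ) : H := (A i).U ⟨x i, hxA i⟩
  let bottom (i : Fin n) : (B i).U.domain := ⟨x i, (U_le (hAB i i.2).1).1 (hxA i)⟩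
  let nextBottom (i : Fin n) : (B i).U.domain := ⟨x (i + 1), (U_le (hAB i i.2).2).1 (hxA (i + 1))⟩
  let top (i : Fin n) : (B i).V.domain := ⟨f i, hfB i⟩
  have U_bottom (i : Fin n) : (B i).U (bottom i) = y i := (U_apply_eq (hAB i i.2).1 rfl).symm
  have U_nextBottom (i : Fin n) : (B i).U (nextBottom i) = y (i + 1) :=
    (U_apply_eq (hAB i i.2).2 rfl).symm
  obtain ⟨hy, hVf⟩ :=
    (linearIndependent_apply_iff hlin hrank (fun i : Fin n => B i) bottom top).mpr ⟨hx, hf⟩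
  simp only [U_bottom] at hy
  obtain ⟨t, ht, hyt⟩ := exists_U_apply_eq_smul hlin hrank hL hspace.symm
  have hy_sub : LinearIndependent ℂ fun i : Fin n => (B i).U (bottom i - nextBottom i) := by
    simp only [LinearPMap.map_sub, U_bottom, U_nextBottom]
    exact linearIndependent_sub_succ hy (hyt ⟨_, hxA 0⟩ ⟨_, hxA n⟩ hxn.symm)
      fun h => hne (ht (Units.ext h)).symm
  exact not_linearIndependent_sub_succ hn hxn
    ((linearIndependent_apply_iff hlin hrank (fun i : Fin n => B i) _ top).mp
      ⟨hy_sub, hVf⟩).1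

theorem IsIrreducibleLoop.last_eq_first (hL : IsCSL L) (hlin : IsLinearOnAlg L Φ)
    (hrank : RankPreserving L Φ) {n : ℕ} {A B : ℕ → LocalPair L Φ}
    (h : IsIrreducibleLoop LocalPair.space n A B) : A n = A 0 := by
  have hL' := hL.toIsSubspaceLattice
  choose x hx hx₀ using fun M : famF L => (Submodule.ne_bot_iff _).mp M.2.2.1
  choose f hf hf₀ using fun M : famF L => hL'.exists_ne_zero_mem_orthogonal_minus M.2
  refine LocalPair.last_eq_first_of_linearIndependent hL' hlin hrank
    (fun i hi => ⟨h.le i hi, h.succ_le i hi⟩) h.closed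
    (fun i => LocalPair.mem_domain_U.mpr (hx (A i).space)) (congrArg x h.closed)
    (fun i => LocalPair.mem_domain_V.mpr (hf (B i).space)) ?_ ?_
  · exact linearIndependent_of_isOrtho
      (fun i j hij hj => hL.isOrtho_of_not_bddBelow (h.not_bddBelow i j hij hj))
      (fun _ => hx _) fun _ => hx₀ _
  · exact linearIndependent_of_isOrtho
      (fun i j hij hj => hL.isOrtho_orthogonal_minus_of_not_bddAbove (h.not_bddAbove i j hij hj))
      (fun _ => hf _) fun _ => hf₀ _

end Monodromy

section GlobalPair

variable {H : Type*} [NormedAddCommGroup H] [InnerProductSpace ℂ H] [CompleteSpace H]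
  {L : Set (Submodule ℂ H)} {Φ : (H →L[ℂ] H) → (H →L[ℂ] H)}

namespace LocalPair

theorem exists_monotone_section_space (hL : IsCSL L) (hlin : IsLinearOnAlg L Φ)
    (hrank : RankPreserving L Φ) (hcons : ∀ M ∈ famF L, Consistent L Φ M) :
    ∃ s : famF L → LocalPair L Φ, Monotone s ∧ ∀ M, (s M).space = M := by
  have hcover := isOrderCovering_space hlin hrank hL.toIsSubspaceLattice hcons
  exact hcover.exists_monotone_section (exists_space_eq hcons)
    (hcover.eq_of_zigzag fun n A B h => h.last_eq_first hL hlin hrank)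

variable {s : famF L → LocalPair L Φ} (hL : IsCSL L) (hs : Monotone s)
  (hspace : ∀ M, (s M).space = M)
include hL hs hspace

theorem exists_linearMap_extending_U :
    ∃ U : H →ₗ[ℂ] H, ∀ M (x : (s M).U.domain), U x = (s M).U x := by
  have hproj (M : famF L) := hL.hasOrthogonalProjection M.2.1
  refine exists_linearMap_extending_of_commute (K := fun M : famF L => M)
    (fun M => by rw [domain_U, hspace])
    (fun M M' => hL.commute_starProjection M.2.1 M'.2.1) fun M M' x hx₀ hx hx' => ?_
  let inter : famF L := ⟨M ⊓ M', hL.inf_mem_famF M.2 M'.2 hx₀ hx hx'⟩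
  have le_left : inter ≤ M := Subtype.coe_le_coe.mp inf_le_left
  have le_right : inter ≤ M' := Subtype.coe_le_coe.mp inf_le_right
  exact ⟨inter, U_le (hs le_left), U_le (hs le_right), hx, hx'⟩

theorem exists_linearMap_extending_V :
    ∃ V : H →ₗ[ℂ] H, ∀ M (f : (s M).V.domain), V f = (s M).V f := by
  have hproj (M : famF L) := hL.hasOrthogonalProjection (hL.minus_mem M)
  refine exists_linearMap_extending_of_commute (K := fun M : famF L => (minus L M)ᗮ)
    (fun M => by rw [domain_V, hspace])
    (fun M M' => commute_starProjection_orthogonal <|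
      hL.commute_starProjection (hL.minus_mem M) (hL.minus_mem M'))
    fun M M' f hf₀ hf hf' => ?_
  obtain ⟨join_mem, hf_join⟩ := hL.closedJoin_pair_mem_famF M.2 M'.2 hf₀ hf hf'
  let join : famF L := ⟨_, join_mem⟩
  have left_le : M ≤ join := le_closedJoin (Set.mem_insert _ _)
  have right_le : M' ≤ join := le_closedJoin (Set.mem_insert_of_mem _ rfl)
  exact ⟨join, V_le (hs left_le), V_le (hs right_le), hf_join⟩

end LocalPair

theorem stmt_11_general (hL : IsCSL L) (hlin : IsLinearOnAlg L Φ) (hrank : RankPreserving L Φ)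
    (hcons : ∀ M ∈ famF L, Consistent L Φ M) :
    ∃ U V : H →ₗ[ℂ] H, ∀ M ∈ famF L, ∀ x ∈ M, ∀ f ∈ (minus L M)ᗮ,
      Φ (rankOne x f) = rankOne (U x) (V f) := by
  obtain ⟨s, hs, hspace⟩ := LocalPair.exists_monotone_section_space hL hlin hrank hcons
  obtain ⟨U, hU⟩ := LocalPair.exists_linearMap_extending_U hL hs hspace
  obtain ⟨V, hV⟩ := LocalPair.exists_linearMap_extending_V hL hs hspace
  refine ⟨U, V, fun M hM x hx f hf => ?_⟩
  let M' : famF L := ⟨M, hM⟩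
  have hxU : x ∈ (s M').U.domain := by rwa [(s M').domain_U, hspace]
  have hfV : f ∈ (s M').V.domain := by rwa [(s M').domain_V, hspace]
  rw [hU M' ⟨x, hxU⟩, hV M' ⟨f, hfV⟩]
  exact (s M').map_rankOne ⟨x, hxU⟩ ⟨f, hfV⟩

end GlobalPair

theorem stmt_11 {H : Type*} [NormedAddCommGroup H] [InnerProductSpace ℂ H]
    [CompleteSpace H] [TopologicalSpace.SeparableSpace H]
    (L : Set (Submodule ℂ H)) (hL : IsCSL L) (hcd : IsCompletelyDistributive L)
    (Φ : (H →L[ℂ] H) → (H →L[ℂ] H)) (hlin : IsLinearOnAlg L Φ)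
    (hrank : RankPreserving L Φ)
    (hcons : ∀ N' ∈ famF L, Consistent L Φ N')
    (N : Submodule ℂ H) (hN : N ∈ famF L) :
    ∃ (U : (sSup (GSet L N) : Submodule ℂ H) →ₗ[ℂ] H)
      (V : (sSup ((fun M => ((minus L M)ᗮ : Submodule ℂ H)) '' GSet L N) :
              Submodule ℂ H) →ₗ[ℂ] H),
      (sSup (GSet L N)).topologicalClosure = closedJoin (GSet L N) ∧
      (sSup ((fun M => ((minus L M)ᗮ : Submodule ℂ H)) '' GSet L N)).topologicalClosure
        = closedJoin ((fun M => ((minus L M)ᗮ : Submodule ℂ H)) '' GSet L N) ∧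
      ∀ (x : (sSup (GSet L N) : Submodule ℂ H))
        (f : (sSup ((fun M => ((minus L M)ᗮ : Submodule ℂ H)) '' GSet L N) :
                Submodule ℂ H))
        (M : Submodule ℂ H), M ∈ GSet L N → (x : H) ∈ M → (f : H) ∈ (minus L M)ᗮ →
          Φ (rankOne (x : H) (f : H)) = rankOne (U x) (V f) := by
  obtain ⟨U, V, h⟩ := stmt_11_general hL hlin hrank hcons
  exact ⟨U.domRestrict _, V.domRestrict _, rfl, rfl, fun x f M hM hx hf => h M hM.1 x hx f hf⟩
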